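/- Let u ∈ BV(X). There is a constant C ≥ 1 depending only on C_d and C_P such that for μ-a.e. x ∈ X the following hold: the limit D(x) := lim_{r→0} V(u,B(x,r))/μ(B(x,r)) exists and is finite; if D(x) > 0, then there exist R > 0 and a set A ⊆ X with x ∉ A and A of density 0 at x such that the restriction of u to B(x,R)∖A is Lipschitz with constant C·D(x); and if D(x) = 0, then for every δ > 0 there exist R > 0 and a set A ⊆ X with x ∉ A and A of density 0 at x such that the restriction of u to B(x,R)∖A is Lipschitz with constant δ. -/

import Mathlib

open MeasureTheory Metric Filter Set Topology
open scoped NNReal ENNReal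

noncomputable section

universe u

/-- The measure `μ` is doubling with constant `Cd`:
`0 < μ(B(x,2r)) ≤ Cd·μ(B(x,r)) < ∞` for every `x` and every `r > 0`. -/
def IsDoublingWith {X : Type u} [PseudoMetricSpace X] [MeasurableSpace X]
    (μ : Measure X) (Cd : ℝ≥0) : Prop :=
  ∀ (x : X) (r : ℝ), 0 < r →
    0 < μ (ball x (2 * r)) ∧
      μ (ball x (2 * r)) ≤ (Cd : ℝ≥0∞) * μ (ball x r) ∧
      (Cd : ℝ≥0∞) * μ (ball x r) < ⊤

/-- `X` is a geodesic space: any two points are joined by a unit-speed geodesic. -/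
def IsGeodesic (X : Type u) [PseudoMetricSpace X] : Prop :=
  ∀ x y : X, ∃ γ : ℝ → X,
    LipschitzOnWith 1 γ (Icc 0 (dist x y)) ∧ γ 0 = x ∧ γ (dist x y) = y

/-- `g` is an upper gradient of `u`: for every `L ≥ 0` and every `1`-Lipschitz curve
`γ : [0,L] → X`, `|u(γ 0) − u(γ L)| ≤ ∫₀^L g(γ t) dt`. -/
def IsUpperGradientOf {X : Type u} [PseudoMetricSpace X] (g u : X → ℝ) : Prop :=
  ∀ L : ℝ, 0 ≤ L → ∀ γ : ℝ → X, LipschitzOnWith 1 γ (Icc 0 L) →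
    |u (γ 0) - u (γ L)| ≤ ∫ t in (0:ℝ)..L, g (γ t)

/-- The lower pointwise Lipschitz constant
`lip u (x) = liminf_{r→0} r⁻¹ sup_{y ∈ B(x,r)} |u y − u x|`. -/
def lipConst {X : Type u} [PseudoMetricSpace X] (u : X → ℝ) (x : X) : ℝ≥0∞ :=
  Filter.liminf
    (fun r : ℝ => ⨆ y ∈ ball x r, ENNReal.ofReal (|u y - u x| / r)) (𝓝[>] (0:ℝ))

/-- `u` is locally Lipschitz on `W`: Lipschitz on every closed bounded subset of `W`. -/
def LocallyLipschitzOnSet {X : Type u} [PseudoMetricSpace X] (u : X → ℝ) (W : Set X) : Prop :=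
  ∀ K : Set X, IsClosed K → Bornology.IsBounded K → K ⊆ W →
    ∃ L : ℝ≥0, LipschitzOnWith L u K

/-- `u i → f` in `L¹_loc(W)`. -/
def TendstoL1loc {X : Type u} [PseudoMetricSpace X] [MeasurableSpace X]
    (μ : Measure X) (u : ℕ → X → ℝ) (f : X → ℝ) (W : Set X) : Prop :=
  ∀ K : Set X, IsClosed K → Bornology.IsBounded K → K ⊆ W →
    Tendsto (fun i => ∫⁻ x in K, ENNReal.ofReal |u i x - f x| ∂μ) atTop (𝓝 0)

/-- Total variation `V(f,W)` of `f` on an open set `W`: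
the infimum over sequences of locally Lipschitz functions converging to `f` in `L¹_loc(W)`
of the liminf of `∫_W lip u_i dμ`. -/
def totVarOn {X : Type u} [PseudoMetricSpace X] [MeasurableSpace X]
    (μ : Measure X) (f : X → ℝ) (W : Set X) : ℝ≥0∞ :=
  ⨅ (us : ℕ → X → ℝ) (_ : ∀ i, LocallyLipschitzOnSet (us i) W)
    (_ : TendstoL1loc μ us f W),
    Filter.liminf (fun i => ∫⁻ x in W, lipConst (us i) x ∂μ) atTop

/-- Total variation `V(f,A)` of `f` on an arbitrary set `A`:
infimum of `V(f,W)` over open `W ⊇ A`. -/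
def totVarSet {X : Type u} [PseudoMetricSpace X] [MeasurableSpace X]
    (μ : Measure X) (f : X → ℝ) (A : Set X) : ℝ≥0∞ :=
  ⨅ (W : Set X) (_ : IsOpen W) (_ : A ⊆ W), totVarOn μ f W

/-- `f` is of bounded variation: locally integrable and `V(f,X) < ∞`. -/
def IsBV {X : Type u} [MetricSpace X] [MeasurableSpace X]
    (μ : Measure X) (f : X → ℝ) : Prop :=
  LocallyIntegrable f μ ∧ totVarOn μ f Set.univ < ⊤

/-- `(X,d,μ)` supports a `1`-Poincaré inequality with constant `CP`. -/
def SupportsPoincare {X : Type u} [MetricSpace X] [MeasurableSpace X]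
    (μ : Measure X) (CP : ℝ) : Prop :=
  ∀ u : X → ℝ, LocallyLipschitzOnSet u Set.univ →
    ∀ g : X → ℝ, (∀ x, 0 ≤ g x) → Measurable g → IsUpperGradientOf g u →
      ∀ (x : X) (r : ℝ), 0 < r →
        (⨍ y in ball x r, |u y - (⨍ z in ball x r, u z ∂μ)| ∂μ) ≤
          CP * r * (⨍ y in ball x r, g y ∂μ)

/-- Standing assumptions: a complete geodesic metric measure space with at least two
points, whose measure is doubling and supports a 1-Poincaré inequality. -/
def GoodSpace (X : Type u) [MetricSpace X] [MeasurableSpace X]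
    (μ : Measure X) (Cd : ℝ≥0) (CP : ℝ) : Prop :=
  Nontrivial X ∧ CompleteSpace X ∧ IsGeodesic X ∧
    IsDoublingWith μ Cd ∧ SupportsPoincare μ CP

/-- The codimension-1 Hausdorff measure
`𝓗(A) = sup_{δ>0} inf { Σ μ(B_i)/r_i : 0 < r_i ≤ δ, A ⊆ ⋃ B_i }`,
the infimum over countable coverings of `A` by balls (balls of nonpositive radius
are empty and contribute `0`). -/
def codimOneH {X : Type u} [PseudoMetricSpace X] [MeasurableSpace X]
    (μ : Measure X) (A : Set X) : ℝ≥0∞ :=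
  ⨆ (δ : ℝ) (_ : 0 < δ),
    ⨅ (c : ℕ → X) (r : ℕ → ℝ) (_ : ∀ i, r i ≤ δ)
      (_ : A ⊆ ⋃ i, ball (c i) (r i)),
      ∑' i, if 0 < r i then μ (ball (c i) (r i)) / ENNReal.ofReal (r i) else 0

/-- The measure theoretic boundary `∂*E`. -/
def measBdry {X : Type u} [PseudoMetricSpace X] [MeasurableSpace X]
    (μ : Measure X) (E : Set X) : Set X :=
  {x : X |
    0 < Filter.limsup (fun r : ℝ => μ (E ∩ ball x r) / μ (ball x r)) (𝓝[>] (0:ℝ)) ∧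
    0 < Filter.limsup (fun r : ℝ => μ (Eᶜ ∩ ball x r) / μ (ball x r)) (𝓝[>] (0:ℝ))}

/-- `A` has density `0` at `x`. -/
def DensityZeroAt {X : Type u} [PseudoMetricSpace X] [MeasurableSpace X]
    (μ : Measure X) (A : Set X) (x : X) : Prop :=
  Tendsto (fun r : ℝ => μ (A ∩ ball x r) / μ (ball x r)) (𝓝[>] (0:ℝ)) (𝓝 0)

/-- `A` has density `1` at `x`. -/
def DensityOneAt {X : Type u} [PseudoMetricSpace X] [MeasurableSpace X]
    (μ : Measure X) (A : Set X) (x : X) : Prop :=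
  Tendsto (fun r : ℝ => μ (A ∩ ball x r) / μ (ball x r)) (𝓝[>] (0:ℝ)) (𝓝 1)

/-- `x` is a Lebesgue point of `u`. -/
def LebesguePointOf {X : Type u} [MetricSpace X] [MeasurableSpace X]
    (μ : Measure X) (u : X → ℝ) (x : X) : Prop :=
  Tendsto (fun r : ℝ => ⨍ y in ball x r, |u y - u x| ∂μ) (𝓝[>] (0:ℝ)) (𝓝 0)

/-- `u` is a Borel representative whose value at each Lebesgue point equals the limit
of its ball averages. -/
def PreciseRep {X : Type u} [MetricSpace X] [MeasurableSpace X]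
    (μ : Measure X) (u : X → ℝ) : Prop :=
  Measurable u ∧ ∀ (x : X) (c : ℝ),
    Tendsto (fun r : ℝ => ⨍ y in ball x r, u y ∂μ) (𝓝[>] (0:ℝ)) (𝓝 c) → u x = c

/-- The restricted maximal function `M_R ν (x) = sup_{0<r≤R} ν(B(x,r))/μ(B(x,r))`. -/
def restrMaximal {X : Type u} [PseudoMetricSpace X] [MeasurableSpace X]
    (μ ν : Measure X) (R : ℝ) (x : X) : ℝ≥0∞ :=
  ⨆ (r : ℝ) (_ : 0 < r) (_ : r ≤ R), ν (ball x r) / μ (ball x r)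

/-- `F_g(x,y)`: the infimum of `∫_γ g ds` over 1-Lipschitz curves `γ : [0,L] → Z`
joining `x` to `y` (the infimum over the empty set is `∞`). -/
def curveInf {Z : Type u} [PseudoMetricSpace Z] (g : Z → ℝ) (x y : Z) : ℝ≥0∞ :=
  ⨅ (L : ℝ) (_ : 0 ≤ L) (γ : ℝ → Z) (_ : LipschitzOnWith 1 γ (Icc 0 L))
    (_ : γ 0 = x) (_ : γ L = y),
    ∫⁻ t in Icc (0:ℝ) L, ENNReal.ofReal (g (γ t))

/-- Weak-star convergence of measures: test against continuous, compactly
supported functions. -/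
def WeakStar {Z : Type u} [MetricSpace Z] [MeasurableSpace Z]
    (ν : ℕ → Measure Z) (m : Measure Z) : Prop :=
  ∀ φ : Z → ℝ, Continuous φ → HasCompactSupport φ →
    Tendsto (fun n => ∫ x, φ x ∂(ν n)) atTop (𝓝 (∫ x, φ x ∂m))

/-- `φ ∈ BV_c(U)`: a BV function whose support is compact and contained in `U`. -/
def MemBVc {X : Type u} [MetricSpace X] [MeasurableSpace X]
    (μ : Measure X) (φ : X → ℝ) (U : Set X) : Prop :=
  IsBV μ φ ∧ IsCompact (tsupport φ) ∧ tsupport φ ⊆ U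

/-!
The total variation is superadditive over disjoint balls, so a Vitali covering argument, in which
balls and closed balls are interchangeable because spheres of a doubling geodesic space are porous
and hence null, shows that its density `D` with respect to `μ` exists and is finite almost
everywhere. The Poincaré inequality passes from locally Lipschitz functions to `u` and bounds the
mean oscillation of `u` on a ball of radius `r` by `r` times the density of the total variation at
scale `2 r`. If that density is at most `q` at all small scales around two nearby Lebesgue points
`y` and `z`, telescoping over dyadic balls gives `|u y - u z| ≲ q * dist y z`. The points whose
density stays below `q` at all scales smaller than `ρ` form a closed set, whose complement therefore
has density `0` at almost every point of the set; letting `q` decrease to `D` finishes the proof.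
-/

lemma IsGeodesic.exists_dist_le_dist_le_sub {X : Type*} [PseudoMetricSpace X]
    (hg : IsGeodesic X) (x y : X) {t : ℝ} (ht : t ∈ Icc 0 (dist x y)) :
    ∃ z, dist z x ≤ t ∧ dist z y ≤ dist x y - t := by
  obtain ⟨γ, hγ, hγ0, hγ1⟩ := hg x y
  refine ⟨γ t, ?_, ?_⟩
  · simpa [hγ0, Real.dist_eq, abs_of_nonneg ht.1] using hγ.dist_le_mul t ht 0 ⟨le_rfl, dist_nonneg⟩
  · simpa [hγ1, Real.dist_eq, abs_sub_comm t, abs_of_nonneg (sub_nonneg.2 ht.2)] using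
      hγ.dist_le_mul t ht _ ⟨dist_nonneg, le_rfl⟩

section Doubling

variable {X : Type*} [PseudoMetricSpace X] [MeasurableSpace X] {μ : Measure X} {Cd : ℝ≥0}

lemma secondCountableTopology_of_isOpenPosMeasure [OpensMeasurableSpace X] (μ : Measure X)
    [SFinite μ] [μ.IsOpenPosMeasure] : SecondCountableTopology X := by
  refine Metric.secondCountable_of_almost_dense_set fun ε hε => ?_
  obtain ⟨s, -, hdisj, hcov⟩ := Vitali.exists_disjoint_subfamily_covering_enlargement_closedBall
    (univ : Set X) id (fun _ => ε / 4) (ε / 4) (fun _ _ => le_rfl) 4 (by norm_num)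
  refine ⟨s, ?_, fun x => ?_⟩
  · have hpos : {i : s | 0 < μ (closedBall (i : X) (ε / 4))} = univ :=
      eq_univ_of_forall fun i => measure_closedBall_pos μ i (by positivity)
    have hcount := Measure.countable_meas_pos_of_disjoint_iUnion (μ := μ)
      (As := fun i : s => closedBall (i : X) (ε / 4)) (fun _ => isClosed_closedBall.measurableSet)
      fun i j hij => hdisj i.2 j.2 (Subtype.coe_ne_coe.2 hij)
    rwa [hpos, countable_univ_iff] at hcount
  · obtain ⟨y, hy, hxy⟩ := hcov x (mem_univ x)
    exact ⟨y, hy, by simpa [mul_div_cancel₀] using hxy (mem_closedBall_self (by positivity))⟩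

namespace IsDoublingWith

lemma measure_ball_pos (h : IsDoublingWith μ Cd) (x : X) {r : ℝ} (hr : 0 < r) :
    0 < μ (ball x r) := by
  simpa [mul_div_cancel₀] using (h x (r / 2) (by positivity)).1

lemma measure_ball_two_mul_le (h : IsDoublingWith μ Cd) (x : X) {r : ℝ} (hr : 0 < r) :
    μ (ball x (2 * r)) ≤ Cd * μ (ball x r) :=
  (h x r hr).2.1

lemma measure_ball_four_mul_le (h : IsDoublingWith μ Cd) (x : X) {r : ℝ} (hr : 0 < r) :
    μ (ball x (4 * r)) ≤ (Cd ^ 2 : ℝ≥0) * μ (ball x r) := by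
  calc μ (ball x (4 * r)) = μ (ball x (2 * (2 * r))) := by ring_nf
    _ ≤ Cd * μ (ball x (2 * r)) := h.measure_ball_two_mul_le x (by positivity)
    _ ≤ Cd * (Cd * μ (ball x r)) := by gcongr; exact h.measure_ball_two_mul_le x hr
    _ = (Cd ^ 2 : ℝ≥0) * μ (ball x r) := by push_cast; ring

lemma measure_ball_lt_top (h : IsDoublingWith μ Cd) (x : X) (r : ℝ) : μ (ball x r) < ⊤ := by
  rcases le_or_gt r 0 with hr | hr
  · simp [ball_eq_empty.2 hr]
  · obtain ⟨hpos, hle, hlt⟩ := h x r hr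
    exact ENNReal.lt_top_of_mul_ne_top_right hlt.ne (left_ne_zero_of_mul (hpos.trans_le hle).ne')

lemma measure_closedBall_pos (h : IsDoublingWith μ Cd) (x : X) {r : ℝ} (hr : 0 < r) :
    0 < μ (closedBall x r) :=
  (h.measure_ball_pos x hr).trans_le (measure_mono ball_subset_closedBall)

lemma measure_closedBall_lt_top (h : IsDoublingWith μ Cd) (x : X) (r : ℝ) :
    μ (closedBall x r) < ⊤ :=
  (measure_mono (closedBall_subset_ball (lt_add_one r))).trans_lt (h.measure_ball_lt_top x _)

lemma isUnifLocDoublingMeasure (h : IsDoublingWith μ Cd) : IsUnifLocDoublingMeasure μ := by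
  refine ⟨⟨Cd ^ 2, ?_⟩⟩
  filter_upwards [self_mem_nhdsWithin] with r (hr : 0 < r) x
  calc μ (closedBall x (2 * r)) ≤ μ (ball x (4 * r)) :=
        measure_mono (closedBall_subset_ball (by linarith))
    _ ≤ (Cd ^ 2 : ℝ≥0) * μ (ball x r) := h.measure_ball_four_mul_le x hr
    _ ≤ (Cd ^ 2 : ℝ≥0) * μ (closedBall x r) := by gcongr; exact ball_subset_closedBall

lemma isLocallyFiniteMeasure (h : IsDoublingWith μ Cd) : IsLocallyFiniteMeasure μ :=
  ⟨fun x => ⟨ball x 1, ball_mem_nhds x one_pos, h.measure_ball_lt_top x 1⟩⟩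

lemma isOpenPosMeasure (h : IsDoublingWith μ Cd) : μ.IsOpenPosMeasure := by
  refine ⟨fun U hU ⟨x, hx⟩ => ?_⟩
  obtain ⟨r, hr, hrU⟩ := Metric.isOpen_iff.1 hU x hx
  exact ((h.measure_ball_pos x hr).trans_le (measure_mono hrU)).ne'

lemma sigmaFinite (h : IsDoublingWith μ Cd) : SigmaFinite μ := by
  rcases isEmpty_or_nonempty X with _ | ⟨⟨x⟩⟩
  · rw [Measure.eq_zero_of_isEmpty μ]
    infer_instance
  · exact ⟨⟨{ set := fun n => ball x n
              set_mem := fun _ => trivial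
              finite := fun n => h.measure_ball_lt_top x n
              spanning := iUnion_ball_nat x }⟩⟩

lemma secondCountableTopology [OpensMeasurableSpace X] (h : IsDoublingWith μ Cd) :
    SecondCountableTopology X :=
  have := h.sigmaFinite
  have := h.isOpenPosMeasure
  secondCountableTopology_of_isOpenPosMeasure μ

variable [BorelSpace X]

lemma ae_tendsto_measure_inter_closedBall_div (h : IsDoublingWith μ Cd) {S : Set X}
    (hS : MeasurableSet S) :
    ∀ᵐ x ∂μ, Tendsto (fun r => μ (S ∩ closedBall x r) / μ (closedBall x r)) (𝓝[>] 0)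
      (𝓝 (S.indicator 1 x)) := by
  have := h.isUnifLocDoublingMeasure
  have := h.isLocallyFiniteMeasure
  have := h.secondCountableTopology
  filter_upwards [(IsUnifLocDoublingMeasure.vitaliFamily μ
    1).ae_tendsto_measure_inter_div_of_measurableSet hS] with x hx
  refine hx.comp (IsUnifLocDoublingMeasure.tendsto_closedBall_filterAt μ (fun _ => x) id
    tendsto_id ?_)
  filter_upwards [self_mem_nhdsWithin] with r (hr : 0 < r)
  exact mem_closedBall_self (by simpa using hr.le)

lemma measure_eq_zero_of_porous (h : IsDoublingWith μ Cd) {S : Set X}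
    (hS : MeasurableSet S) (c : ℝ≥0)
    (hc : ∀ x ∈ S, ∃ᶠ r in 𝓝[>] 0, μ (closedBall x r) ≤ c * μ (closedBall x r \ S)) :
    μ S = 0 := by
  rw [measure_eq_zero_iff_ae_notMem]
  filter_upwards [h.ae_tendsto_measure_inter_closedBall_div hS.compl] with x hx hxS
  rw [indicator_of_notMem (notMem_compl_iff.2 hxS)] at hx
  have hlim := ENNReal.Tendsto.const_mul (a := c) hx (Or.inr ENNReal.coe_ne_top)
  rw [mul_zero] at hlim
  refine not_lt_of_ge (ge_of_tendsto_of_frequently hlim ?_) one_pos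
  refine ((hc x hxS).and_eventually self_mem_nhdsWithin).mono fun r ⟨hr, hr0⟩ => ?_
  rw [← mul_div_assoc, inter_comm, ← sdiff_eq]
  exact (ENNReal.le_div_iff_mul_le (Or.inl (h.measure_closedBall_pos x hr0).ne')
    (Or.inl (h.measure_closedBall_lt_top x r).ne)).2 (by rwa [one_mul])

lemma measure_sphere (h : IsDoublingWith μ Cd) (hg : IsGeodesic X) (x : X) {r : ℝ} (hr : 0 < r) :
    μ (sphere x r) = 0 := by
  refine h.measure_eq_zero_of_porous isClosed_sphere.measurableSet (Cd ^ 2) fun y hy =>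
    Eventually.frequently ?_
  filter_upwards [Ioo_mem_nhdsGT hr] with s ⟨hs, hsr⟩
  rw [mem_sphere] at hy
  obtain ⟨z, hzy, hzx⟩ := hg.exists_dist_le_dist_le_sub y x (t := s / 2)
    ⟨by positivity, by linarith⟩
  have hball : ball z (s / 2) ⊆ closedBall y s \ sphere x r := by
    intro w hw
    rw [mem_ball] at hw
    refine ⟨?_, fun hws => ?_⟩
    · rw [mem_closedBall]; linarith [dist_triangle w z y]
    · rw [mem_sphere] at hws; linarith [dist_triangle w z x]
  have hbig : closedBall y s ⊆ ball z (4 * (s / 2)) := by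
    intro w hw
    rw [mem_closedBall] at hw
    rw [mem_ball]
    linarith [dist_triangle w y z, dist_comm y z]
  calc μ (closedBall y s) ≤ μ (ball z (4 * (s / 2))) := measure_mono hbig
    _ ≤ (Cd ^ 2 : ℝ≥0) * μ (ball z (s / 2)) := h.measure_ball_four_mul_le z (by positivity)
    _ ≤ (Cd ^ 2 : ℝ≥0) * μ (closedBall y s \ sphere x r) := by gcongr

lemma ball_ae_eq_closedBall (h : IsDoublingWith μ Cd) (hg : IsGeodesic X) (x : X) {r : ℝ}
    (hr : 0 < r) : ball x r =ᵐ[μ] closedBall x r := by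
  rw [← ball_union_sphere]
  exact (union_ae_eq_left_of_ae_eq_empty (ae_eq_empty.2 (h.measure_sphere hg x hr))).symm

end IsDoublingWith

end Doubling

section LipConst

variable {X : Type*} [PseudoMetricSpace X] {v w : X → ℝ} {K : ℝ≥0} {x : X}

/-- The difference quotient `r⁻¹ sup_{y ∈ B(x,r)} |v y − v x|` of `v` at scale `r`; its lower limit
as `r → 0` is `lipConst v x`. -/
def oscQuotient (v : X → ℝ) (x : X) (r : ℝ) : ℝ≥0∞ :=
  ⨆ y ∈ ball x r, ENNReal.ofReal (|v y - v x| / r)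

lemma lipConst_eq_liminf_oscQuotient (v : X → ℝ) (x : X) :
    lipConst v x = liminf (oscQuotient v x) (𝓝[>] 0) :=
  rfl

lemma ofReal_div_le_oscQuotient (v : X → ℝ) {y : X} {r : ℝ} (hy : y ∈ ball x r) :
    ENNReal.ofReal (|v y - v x| / r) ≤ oscQuotient v x r :=
  le_iSup₂ (f := fun y (_ : y ∈ ball x r) => ENNReal.ofReal (|v y - v x| / r)) y hy

lemma oscQuotient_le_of_lipschitzWith (hv : LipschitzWith K v) (x : X) {r : ℝ} (hr : 0 < r) :
    oscQuotient v x r ≤ K := by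
  refine iSup₂_le fun y hy => ENNReal.ofReal_le_of_le_toReal ?_
  rw [ENNReal.coe_toReal, div_le_iff₀ hr, ← Real.dist_eq]
  exact hv.dist_le_mul_of_le (mem_ball.1 hy).le

lemma oscQuotient_le_ofReal_div_mul (v : X → ℝ) (x : X) {q r : ℝ} (hq : 0 < q) (hqr : q ≤ r) :
    oscQuotient v x q ≤ ENNReal.ofReal (r / q) * oscQuotient v x r := by
  have hr : 0 < r := hq.trans_le hqr
  refine iSup₂_le fun y hy => ?_
  calc ENNReal.ofReal (|v y - v x| / q)
      = ENNReal.ofReal (r / q) * ENNReal.ofReal (|v y - v x| / r) := by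
        rw [← ENNReal.ofReal_mul (by positivity)]
        congr 1
        field_simp
    _ ≤ _ := by gcongr; exact ofReal_div_le_oscQuotient v (ball_subset_ball hqr hy)

lemma measurable_oscQuotient [MeasurableSpace X] [OpensMeasurableSpace X] (hv : Continuous v)
    (r : ℝ) : Measurable fun x => oscQuotient v x r := by
  refine measurable_of_Ioi fun a => IsOpen.measurableSet ?_
  have hpreimage : (fun x => oscQuotient v x r) ⁻¹' Ioi a =
      ⋃ y, {x | dist y x < r} ∩ {x | a < ENNReal.ofReal (|v y - v x| / r)} := by
    ext x
    simp [oscQuotient, lt_iSup_iff]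
  rw [hpreimage]
  exact isOpen_iUnion fun y => (isOpen_lt (by fun_prop) continuous_const).inter
    (isOpen_lt continuous_const (ENNReal.continuous_ofReal.comp (by fun_prop)))

lemma lipConst_le_of_lipschitzWith (hv : LipschitzWith K v) (x : X) : lipConst v x ≤ K :=
  liminf_le_of_frequently_le' <| Eventually.frequently <| by
    filter_upwards [self_mem_nhdsWithin] with r hr using oscQuotient_le_of_lipschitzWith hv x hr

lemma lipConst_congr {r : ℝ} (hr : 0 < r) (h : EqOn v w (ball x r)) :
    lipConst v x = lipConst w x := by
  refine liminf_congr ?_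
  filter_upwards [Ioo_mem_nhdsGT hr] with s hs
  refine iSup_congr fun y => iSup_congr fun hy => ?_
  rw [h (ball_subset_ball hs.2.le hy), h (mem_ball_self hr)]

lemma iInf_oscQuotient_rat_le (v : X → ℝ) (x : X) {r ε : ℝ} (hr : r ∈ Ioo 0 ε) :
    ⨅ q : {q : ℚ // (q : ℝ) ∈ Ioo 0 ε}, oscQuotient v x q ≤ oscQuotient v x r := by
  have hlim : Tendsto (fun q : ℝ => ENNReal.ofReal (r / q) * oscQuotient v x r) (𝓝[<] r)
      (𝓝 (oscQuotient v x r)) := by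
    have hdiv : Tendsto (fun q : ℝ => r / q) (𝓝[<] r) (𝓝 1) := by
      rw [← div_self hr.1.ne']
      exact (tendsto_const_nhds.div tendsto_id hr.1.ne').mono_left nhdsWithin_le_nhds
    simpa using ENNReal.Tendsto.mul_const (ENNReal.tendsto_ofReal hdiv)
      (Or.inl (by simp)) (b := oscQuotient v x r)
  refine le_of_forall_gt fun a ha => ?_
  obtain ⟨l, hl, hla⟩ := (mem_nhdsLT_iff_exists_Ioo_subset' hr.1).1 (hlim.eventually_lt_const ha)
  obtain ⟨q, hlq, hqr⟩ := exists_rat_btwn (max_lt hl hr.1)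
  obtain ⟨hlq, hq0⟩ := max_lt_iff.1 hlq
  calc ⨅ q : {q : ℚ // (q : ℝ) ∈ Ioo 0 ε}, oscQuotient v x q
      ≤ oscQuotient v x q := iInf_le _ (⟨q, hq0, hqr.trans hr.2⟩ : {q : ℚ // (q : ℝ) ∈ Ioo 0 ε})
    _ ≤ _ := oscQuotient_le_ofReal_div_mul v x hq0 hqr.le
    _ < a := hla ⟨hlq, hqr⟩

lemma lipConst_eq_iSup_iInf_rat (v : X → ℝ) (x : X) :
    lipConst v x =
      ⨆ n : ℕ, ⨅ q : {q : ℚ // (q : ℝ) ∈ Ioo 0 (1 / ((n : ℝ) + 1))}, oscQuotient v x q := by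
  have hbasis :
      (𝓝[>] (0 : ℝ)).HasBasis (fun _ : ℕ => True) fun n => Ioo 0 (1 / ((n : ℝ) + 1)) := by
    refine (nhdsGT_basis (0 : ℝ)).to_hasBasis (fun ε hε => ?_) fun n _ =>
      ⟨1 / ((n : ℝ) + 1), by positivity, subset_rfl⟩
    obtain ⟨n, hn⟩ := exists_nat_one_div_lt hε
    exact ⟨n, trivial, Ioo_subset_Ioo_right hn.le⟩
  rw [lipConst_eq_liminf_oscQuotient, hbasis.liminf_eq_iSup_iInf]
  simp only [iSup_true]
  exact iSup_congr fun n => le_antisymm (le_iInf fun q => iInf₂_le (q : ℝ) q.2)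
    (le_iInf₂ fun r hr => iInf_oscQuotient_rat_le v x hr)

lemma measurable_lipConst [MeasurableSpace X] [OpensMeasurableSpace X] (hv : Continuous v) :
    Measurable (lipConst v) := by
  rw [funext (lipConst_eq_iSup_iInf_rat v)]
  exact Measurable.iSup fun n => Measurable.iInf fun q => measurable_oscQuotient hv q

lemma ofReal_mul_abs_le_lipConst_of_hasDerivAt {γ : ℝ → X} (hγ : LipschitzWith 1 γ) {t a ρ : ℝ}
    (h : HasDerivAt (v ∘ γ) a t) (hρ : ρ ∈ Ioo 0 1) :
    ENNReal.ofReal (ρ * |a|) ≤ lipConst v (γ t) := by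
  have hderiv : HasDerivAt (fun r => v (γ (t + ρ * r))) (ρ * a) 0 := by
    have hline : HasDerivAt (fun r => t + ρ * r) ρ 0 := by
      simpa using ((hasDerivAt_id (0 : ℝ)).const_mul ρ).const_add t
    have hcomp : HasDerivAt (v ∘ γ) a (t + ρ * 0) := by simpa using h
    simpa [mul_comm, Function.comp_def] using hcomp.comp 0 hline
  have hslope : Tendsto (fun r => ENNReal.ofReal (|v (γ (t + ρ * r)) - v (γ t)| / r)) (𝓝[>] 0)
      (𝓝 (ENNReal.ofReal (ρ * |a|))) := by
    rw [← abs_of_pos hρ.1, ← abs_mul, abs_of_pos hρ.1]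
    refine (ENNReal.tendsto_ofReal hderiv.tendsto_slope_zero_right.abs).congr' ?_
    filter_upwards [self_mem_nhdsWithin] with r (hr : 0 < r)
    simp [abs_mul, abs_of_pos hr, div_eq_inv_mul]
  rw [← hslope.liminf_eq]
  refine liminf_le_liminf ?_
  filter_upwards [self_mem_nhdsWithin] with r (hr : 0 < r)
  refine ofReal_div_le_oscQuotient v (mem_ball.2 ?_)
  calc dist (γ (t + ρ * r)) (γ t) ≤ dist (t + ρ * r) t := by
        simpa only [NNReal.coe_one, one_mul] using hγ.dist_le_mul (t + ρ * r) t
    _ = ρ * r := by rw [Real.dist_eq, add_sub_cancel_left, abs_of_pos (mul_pos hρ.1 hr)]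
    _ < r := mul_lt_of_lt_one_left hr hρ.2

lemma ofReal_abs_le_lipConst_of_hasDerivAt {γ : ℝ → X} (hγ : LipschitzWith 1 γ) {t a : ℝ}
    (h : HasDerivAt (v ∘ γ) a t) : ENNReal.ofReal |a| ≤ lipConst v (γ t) := by
  have hlim : Tendsto (fun ρ : ℝ => ENNReal.ofReal (ρ * |a|)) (𝓝[<] 1)
      (𝓝 (ENNReal.ofReal |a|)) := by
    refine ENNReal.tendsto_ofReal (Tendsto.mono_left ?_ nhdsWithin_le_nhds)
    exact Continuous.tendsto' (by fun_prop) _ _ (one_mul _)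
  refine le_of_tendsto hlim ?_
  filter_upwards [Ioo_mem_nhdsLT one_pos] with ρ hρ
  exact ofReal_mul_abs_le_lipConst_of_hasDerivAt hγ h hρ

lemma lipConst_ne_top_of_lipschitzWith (hv : LipschitzWith K v) (x : X) : lipConst v x ≠ ⊤ :=
  ((lipConst_le_of_lipschitzWith hv x).trans_lt ENNReal.coe_lt_top).ne

lemma abs_sub_le_integral_lipConst [MeasurableSpace X] [BorelSpace X] (hv : LipschitzWith K v)
    {γ : ℝ → X} (hγ : LipschitzWith 1 γ) {L : ℝ} (hL : 0 ≤ L) :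
    |v (γ 0) - v (γ L)| ≤ ∫ t in (0 : ℝ)..L, (lipConst v (γ t)).toReal := by
  have hvγ : LipschitzWith (K * 1) (v ∘ γ) := hv.comp hγ
  have hmeas : Measurable fun t => (lipConst v (γ t)).toReal :=
    ((measurable_lipConst hv.continuous).comp hγ.continuous.measurable).ennreal_toReal
  have hftc : ∫ t in (0 : ℝ)..L, deriv (v ∘ γ) t = v (γ L) - v (γ 0) :=
    hvγ.lipschitzOnWith.absolutelyContinuousOnInterval.integral_deriv_eq_sub
  rw [abs_sub_comm, ← hftc, ← Real.norm_eq_abs]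
  refine intervalIntegral.norm_integral_le_of_norm_le hL ?_ ?_
  · filter_upwards [hvγ.ae_differentiableAt] with t ht _
    exact (ENNReal.ofReal_le_iff_le_toReal (lipConst_ne_top_of_lipschitzWith hv _)).1
      (ofReal_abs_le_lipConst_of_hasDerivAt hγ ht.hasDerivAt)
  · rw [intervalIntegrable_iff]
    refine Measure.integrableOn_of_bounded (M := K) (by simp) hmeas.aestronglyMeasurable
      (Eventually.of_forall fun t => ?_)
    rw [Real.norm_of_nonneg ENNReal.toReal_nonneg]
    exact ENNReal.toReal_le_coe_of_le_coe (lipConst_le_of_lipschitzWith hv _)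

lemma isUpperGradientOf_lipConst [MeasurableSpace X] [BorelSpace X] (hv : LipschitzWith K v) :
    IsUpperGradientOf (fun x => (lipConst v x).toReal) v := by
  intro L hL γ hγ
  set η : ℝ → X := IccExtend hL ((Icc 0 L).domRestrict γ)
  have hη : LipschitzWith 1 η := by
    have hcomp := hγ.to_restrict.comp (LipschitzWith.projIcc hL)
    rwa [one_mul] at hcomp
  have hηγ : EqOn η γ (Icc 0 L) := fun t ht => IccExtend_of_mem hL _ ht
  rw [← hηγ ⟨le_rfl, hL⟩, ← hηγ ⟨hL, le_rfl⟩]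
  refine (abs_sub_le_integral_lipConst hv hη hL).trans_eq
    (intervalIntegral.integral_congr fun t ht => ?_)
  rw [uIcc_of_le hL] at ht
  simp only [hηγ ht]

end LipConst

section TotalVariation

variable {X : Type*} [PseudoMetricSpace X] {f : X → ℝ} {U V : Set X}

lemma LocallyLipschitzOnSet.mono {v : X → ℝ} (hv : LocallyLipschitzOnSet v V) (h : U ⊆ V) :
    LocallyLipschitzOnSet v U :=
  fun K hK hb hKU => hv K hK hb (hKU.trans h)

variable [MeasurableSpace X] {μ : Measure X}

lemma TendstoL1loc.mono {us : ℕ → X → ℝ} (hus : TendstoL1loc μ us f V) (h : U ⊆ V) :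
    TendstoL1loc μ us f U :=
  fun K hK hb hKU => hus K hK hb (hKU.trans h)

lemma totVarOn_le_liminf {us : ℕ → X → ℝ} (hlip : ∀ i, LocallyLipschitzOnSet (us i) V)
    (hlim : TendstoL1loc μ us f V) :
    totVarOn μ f V ≤ liminf (fun i => ∫⁻ x in V, lipConst (us i) x ∂μ) atTop :=
  iInf_le_of_le us (iInf_le_of_le hlip (iInf_le _ hlim))

lemma tsum_totVarOn_le {ι : Type*} [Countable ι] {U : ι → Set X}
    (hm : ∀ i, MeasurableSet (U i)) (hd : Pairwise (Function.onFun Disjoint U))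
    (hUV : ∀ i, U i ⊆ V) : ∑' i, totVarOn μ f (U i) ≤ totVarOn μ f V := by
  refine le_iInf fun us => le_iInf fun hlip => le_iInf fun hlim => ?_
  let _ : MeasurableSpace ι := ⊤
  calc ∑' i, totVarOn μ f (U i)
      ≤ ∑' i, liminf (fun n => ∫⁻ x in U i, lipConst (us n) x ∂μ) atTop :=
        ENNReal.tsum_le_tsum fun i =>
          totVarOn_le_liminf (fun n => (hlip n).mono (hUV i)) (hlim.mono (hUV i))
    _ = ∫⁻ i, liminf (fun n => ∫⁻ x in U i, lipConst (us n) x ∂μ) atTop ∂Measure.count := by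
        rw [lintegral_count]
    _ ≤ liminf (fun n => ∫⁻ i, ∫⁻ x in U i, lipConst (us n) x ∂μ ∂Measure.count) atTop :=
        lintegral_liminf_le fun n => measurable_from_top
    _ ≤ liminf (fun n => ∫⁻ x in V, lipConst (us n) x ∂μ) atTop := by
        refine liminf_le_liminf (Eventually.of_forall fun n => ?_)
        simp only [lintegral_count]
        rw [← lintegral_iUnion hm hd]
        exact lintegral_mono_set (iUnion_subset hUV)

lemma totVarOn_mono (h : U ⊆ V) : totVarOn μ f U ≤ totVarOn μ f V :=
  le_iInf fun _ => le_iInf fun hlip => le_iInf fun hlim =>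
    (totVarOn_le_liminf (fun i => (hlip i).mono h) (hlim.mono h)).trans
      (liminf_le_liminf (Eventually.of_forall fun _ => lintegral_mono_set h))

end TotalVariation

section Differentiation

variable {X : Type*} [PseudoMetricSpace X]

/-- Superadditivity of a set function over countable disjoint families of balls, the only property
of the total variation its differentiation uses. A ball is recorded by its center and radius. -/
def BallSuperadditive (F : Set X → ℝ≥0∞) : Prop :=
  ∀ t : Set (X × ℝ), t.Countable → (t.PairwiseDisjoint fun p => ball p.1 p.2) →
    ∀ V : Set X, (∀ p ∈ t, ball p.1 p.2 ⊆ V) → ∑' p : t, F (ball p.1.1 p.1.2) ≤ F V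

variable [MeasurableSpace X] {μ : Measure X} {Cd : ℝ≥0} {F : Set X → ℝ≥0∞}

lemma ballSuperadditive_totVarOn [OpensMeasurableSpace X] (f : X → ℝ) :
    BallSuperadditive (totVarOn μ f) := by
  intro t ht hd V hV
  have := ht.to_subtype
  exact tsum_totVarOn_le (fun _ => measurableSet_ball)
    (fun i j hij => hd i.2 j.2 (Subtype.coe_ne_coe.2 hij)) fun i => hV i.1 i.2

variable [BorelSpace X]

namespace IsDoublingWith

lemma exists_disjoint_closedBall_covering_ae (h : IsDoublingWith μ Cd) {s : Set X}
    {P : X → ℝ → Prop} (hP : ∀ x ∈ s, ∃ᶠ r : ℝ in 𝓝[>] 0, P x r) :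
    ∃ t : Set (X × ℝ), t.Countable ∧ (∀ p ∈ t, 0 < p.2 ∧ P p.1 p.2) ∧
      (t.PairwiseDisjoint fun p => closedBall p.1 p.2) ∧
      μ (s \ ⋃ p ∈ t, closedBall p.1 p.2) = 0 := by
  have := h.isLocallyFiniteMeasure
  have := h.secondCountableTopology
  obtain ⟨t, ht, htc, hdisj, hcov⟩ := Vitali.exists_disjoint_covering_ae μ s
    {p : X × ℝ | 0 < p.2 ∧ P p.1 p.2} (Cd ^ 2) (fun p => p.2) (fun p => p.1)
    (fun p => closedBall p.1 p.2) (fun _ _ => subset_rfl)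
    (fun p ⟨hp, _⟩ => calc
      μ (closedBall p.1 (3 * p.2)) ≤ μ (ball p.1 (4 * p.2)) :=
          measure_mono (closedBall_subset_ball (by linarith))
      _ ≤ (Cd ^ 2 : ℝ≥0) * μ (ball p.1 p.2) := h.measure_ball_four_mul_le p.1 hp
      _ ≤ (Cd ^ 2 : ℝ≥0) * μ (closedBall p.1 p.2) := by gcongr; exact ball_subset_closedBall)
    (fun p hp => (nonempty_ball.2 hp.1).mono ball_subset_interior_closedBall)
    (fun _ _ => isClosed_closedBall)
    (fun x hx ε hε =>
      let ⟨r, hr, hr0, hrε⟩ := ((hP x hx).and_eventually (Ioc_mem_nhdsGT hε)).exists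
      ⟨(x, r), ⟨hr0, hr⟩, hrε, rfl⟩)
  exact ⟨t, htc, fun p hp => ht hp, hdisj, hcov⟩

lemma exists_disjoint_ball_covering_ae (h : IsDoublingWith μ Cd) (hg : IsGeodesic X)
    {s U : Set X} (hU : IsOpen U) (hsU : s ⊆ U) {P : X → ℝ → Prop}
    (hP : ∀ x ∈ s, ∃ᶠ r : ℝ in 𝓝[>] 0, P x r) :
    ∃ t : Set (X × ℝ), t.Countable ∧ (∀ p ∈ t, P p.1 p.2) ∧ (∀ p ∈ t, ball p.1 p.2 ⊆ U) ∧
      (t.PairwiseDisjoint fun p => ball p.1 p.2) ∧ s ≤ᵐ[μ] ⋃ p ∈ t, ball p.1 p.2 := by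
  obtain ⟨t, htc, ht, hdisj, hcov⟩ := h.exists_disjoint_closedBall_covering_ae
    (P := fun x r => P x r ∧ ball x r ⊆ U) fun x hx => (hP x hx).and_eventually
      ((eventually_ball_subset (hU.mem_nhds (hsU hx))).filter_mono nhdsWithin_le_nhds)
  refine ⟨t, htc, fun p hp => (ht p hp).2.1, fun p hp => (ht p hp).2.2,
    hdisj.mono_on fun p _ => ball_subset_closedBall, (ae_le_set.2 hcov).trans_eq ?_⟩
  exact Filter.EventuallyEq.countable_bUnion htc fun p hp =>
    (h.ball_ae_eq_closedBall hg p.1 (ht p hp).1).symm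

end IsDoublingWith

namespace BallSuperadditive

lemma mul_measure_le (hF : BallSuperadditive F) (h : IsDoublingWith μ Cd) (hg : IsGeodesic X)
    {s U : Set X} (hU : IsOpen U) (hsU : s ⊆ U) (q : ℝ≥0∞)
    (hq : ∀ x ∈ s, ∃ᶠ r : ℝ in 𝓝[>] 0, q * μ (ball x r) ≤ F (ball x r)) : q * μ s ≤ F U := by
  obtain ⟨t, htc, htq, htU, htd, hcov⟩ := h.exists_disjoint_ball_covering_ae hg hU hsU hq
  calc q * μ s ≤ q * ∑' p : t, μ (ball p.1.1 p.1.2) := by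
        gcongr
        exact (measure_mono_ae hcov).trans (measure_biUnion_le _ htc _)
    _ = ∑' p : t, q * μ (ball p.1.1 p.1.2) := ENNReal.tsum_mul_left.symm
    _ ≤ ∑' p : t, F (ball p.1.1 p.1.2) := ENNReal.tsum_le_tsum fun p => htq p p.2
    _ ≤ F U := hF t htc htd U htU

lemma mul_measure_le_mul_measure_of_upcrossing (hF : BallSuperadditive F)
    (h : IsDoublingWith μ Cd) (hg : IsGeodesic X) {s U : Set X} (hU : IsOpen U) (hsU : s ⊆ U)
    {p q : ℝ≥0∞} (hp : ∀ x ∈ s, ∃ᶠ r : ℝ in 𝓝[>] 0, F (ball x r) ≤ p * μ (ball x r))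
    (hq : ∀ x ∈ s, ∃ᶠ r : ℝ in 𝓝[>] 0, q * μ (ball x r) ≤ F (ball x r)) :
    q * μ s ≤ p * μ U := by
  obtain ⟨t, htc, htp, htU, htd, hcov⟩ := h.exists_disjoint_ball_covering_ae hg hU hsU hp
  have hcov' : s ≤ᵐ[μ] ⋃ i ∈ t, s ∩ ball i.1 i.2 := by
    simpa only [inter_self, inter_iUnion₂] using (EventuallyLE.refl _ s).inter hcov
  calc q * μ s ≤ q * ∑' i : t, μ (s ∩ ball i.1.1 i.1.2) := by
        gcongr
        exact (measure_mono_ae hcov').trans (measure_biUnion_le _ htc _)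
    _ = ∑' i : t, q * μ (s ∩ ball i.1.1 i.1.2) := ENNReal.tsum_mul_left.symm
    _ ≤ ∑' i : t, F (ball i.1.1 i.1.2) := ENNReal.tsum_le_tsum fun i =>
        hF.mul_measure_le h hg isOpen_ball inter_subset_right q fun x hx => hq x hx.1
    _ ≤ ∑' i : t, p * μ (ball i.1.1 i.1.2) := ENNReal.tsum_le_tsum fun i => htp i i.2
    _ = p * μ (⋃ i ∈ t, ball i.1 i.2) := by
        rw [ENNReal.tsum_mul_left, measure_biUnion htc htd fun _ _ => measurableSet_ball]
    _ ≤ p * μ U := by gcongr; exact iUnion₂_subset htU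

lemma measure_eq_zero_of_upcrossing (hF : BallSuperadditive F) (h : IsDoublingWith μ Cd)
    (hg : IsGeodesic X) {s : Set X} (hs : μ s ≠ ⊤) {p q : ℝ≥0∞} (hpq : p < q)
    (hp : ∀ x ∈ s, ∃ᶠ r : ℝ in 𝓝[>] 0, F (ball x r) ≤ p * μ (ball x r))
    (hq : ∀ x ∈ s, ∃ᶠ r : ℝ in 𝓝[>] 0, q * μ (ball x r) ≤ F (ball x r)) : μ s = 0 := by
  have := h.isLocallyFiniteMeasure
  have := h.secondCountableTopology
  by_contra hs0
  have hlt : p * μ s < q * μ s := (ENNReal.mul_lt_mul_iff_left hs0 hs).2 hpq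
  have hlt' : μ s < q * μ s / p :=
    (ENNReal.lt_div_iff_mul_lt (Or.inr hs) (Or.inl hpq.ne_top)).2 (by rwa [mul_comm])
  obtain ⟨U, hsU, hU, hUlt⟩ := s.exists_isOpen_lt_of_lt _ hlt'
  refine (hF.mul_measure_le_mul_measure_of_upcrossing h hg hU hsU hp hq).not_gt ?_
  rw [mul_comm]
  exact ENNReal.mul_lt_of_lt_div hUlt

lemma ae_not_upcrossing (hF : BallSuperadditive F) (h : IsDoublingWith μ Cd) (hg : IsGeodesic X)
    {a b : ℝ≥0∞} (hab : a < b) :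
    ∀ᵐ x ∂μ, ¬((∃ᶠ r : ℝ in 𝓝[>] 0, F (ball x r) / μ (ball x r) < a) ∧
      ∃ᶠ r : ℝ in 𝓝[>] 0, b < F (ball x r) / μ (ball x r)) := by
  have := h.secondCountableTopology
  have hne (x : X) (r : ℝ) : μ (ball x r) ≠ ⊤ := (h.measure_ball_lt_top x r).ne
  simp only [ae_iff, not_not]
  refine measure_null_of_locally_null _ fun x _ =>
    ⟨_, inter_mem_nhdsWithin _ (ball_mem_nhds x one_pos), ?_⟩
  refine hF.measure_eq_zero_of_upcrossing h hg
    (measure_ne_top_of_subset inter_subset_right (hne x 1)) hab (fun y hy => ?_) fun y hy => ?_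
  · refine (hy.1.1.and_eventually self_mem_nhdsWithin).mono fun r ⟨hr, hr0⟩ => ?_
    exact (ENNReal.div_le_iff (h.measure_ball_pos y hr0).ne' (hne y r)).1 hr.le
  · exact hy.1.2.mono fun r hr => ENNReal.mul_le_of_le_div hr.le

lemma ae_not_tendsto_top (hF : BallSuperadditive F) (h : IsDoublingWith μ Cd) (hg : IsGeodesic X)
    (hfin : F univ ≠ ⊤) :
    ∀ᵐ x ∂μ, ¬Tendsto (fun r : ℝ => F (ball x r) / μ (ball x r)) (𝓝[>] 0) (𝓝 ⊤) := by
  simp only [ae_iff, not_not]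
  by_contra h0
  obtain ⟨n, hn⟩ := ENNReal.exists_nat_mul_gt h0 hfin
  refine hn.not_ge (hF.mul_measure_le h hg isOpen_univ (subset_univ _) n fun x hx => ?_)
  exact (hx.eventually_const_lt (ENNReal.natCast_lt_top n)).frequently.mono fun r hr =>
    ENNReal.mul_le_of_le_div hr.le

theorem ae_exists_tendsto_div (hF : BallSuperadditive F) (h : IsDoublingWith μ Cd)
    (hg : IsGeodesic X) (hfin : F univ ≠ ⊤) :
    ∀ᵐ x ∂μ, ∃ D : ℝ≥0, Tendsto (fun r : ℝ => F (ball x r) / μ (ball x r)) (𝓝[>] 0) (𝓝 D) := by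
  obtain ⟨d, hdc, hdd⟩ := TopologicalSpace.exists_countable_dense ℝ≥0∞
  have hcross : ∀ᵐ x ∂μ, ∀ a ∈ d, ∀ b ∈ d, a < b →
      ¬((∃ᶠ r : ℝ in 𝓝[>] 0, F (ball x r) / μ (ball x r) < a) ∧
        ∃ᶠ r : ℝ in 𝓝[>] 0, b < F (ball x r) / μ (ball x r)) := by
    simp only [ae_ball_iff hdc, ae_all_iff]
    exact fun a _ b _ hab => hF.ae_not_upcrossing h hg hab
  filter_upwards [hcross, hF.ae_not_tendsto_top h hg hfin] with x hx hxtop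
  obtain ⟨c, hc⟩ := tendsto_of_no_upcrossings hdd hx
  lift c to ℝ≥0 using fun hctop => hxtop (hctop ▸ hc)
  exact ⟨c, hc⟩

end BallSuperadditive

end Differentiation

section Poincare

/-- The mean oscillation of `f` with respect to `ν`. The left-hand side of the Poincaré inequality
on a ball `B` is `meanOsc (μ.restrict B) u`. -/
def meanOsc {α : Type*} [MeasurableSpace α] (ν : Measure α) (f : α → ℝ) : ℝ :=
  ⨍ y, |f y - ⨍ z, f z ∂ν| ∂ν

section MeanOsc

variable {α : Type*} [MeasurableSpace α] {ν : Measure α} {f v : α → ℝ}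

lemma meanOsc_congr (h : f =ᵐ[ν] v) : meanOsc ν f = meanOsc ν v := by
  rw [meanOsc, average_congr h]
  exact average_congr (h.mono fun y hy => by simp only [hy])

lemma meanOsc_le_add [IsFiniteMeasure ν] (hf : Integrable f ν) (hv : Integrable v ν) :
    meanOsc ν f ≤ meanOsc ν v + 2 * ⨍ y, |v y - f y| ∂ν := by
  rcases eq_zero_or_neZero ν with rfl | _
  · simp [meanOsc]
  replace hf := hf.to_average
  replace hv := hv.to_average
  unfold meanOsc average
  set P := (ν univ)⁻¹ • ν
  have hvf : Integrable (fun y => |v y - f y|) P := (hv.sub hf).abs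
  have hvm : Integrable (fun y => |v y - ∫ z, v z ∂P|) P := (hv.sub (integrable_const _)).abs
  have hmean : |∫ z, v z ∂P - ∫ z, f z ∂P| ≤ ∫ z, |v z - f z| ∂P := by
    rw [← integral_sub hv hf]
    exact abs_integral_le_integral_abs
  calc ∫ y, |f y - ∫ z, f z ∂P| ∂P
      ≤ ∫ y, (|v y - ∫ z, v z ∂P| + |v y - f y| + ∫ z, |v z - f z| ∂P) ∂P := by
        refine integral_mono (hf.sub (integrable_const _)).abs
          ((hvm.add hvf).add (integrable_const _)) fun y => ?_
        have htri := abs_sub_le (f y) (v y) (∫ z, f z ∂P)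
        have htri' := abs_sub_le (v y) (∫ z, v z ∂P) (∫ z, f z ∂P)
        rw [abs_sub_comm (f y) (v y)] at htri
        dsimp only
        linarith
    _ = ∫ y, |v y - ∫ z, v z ∂P| ∂P + 2 * ∫ y, |v y - f y| ∂P := by
        refine (integral_add (hvm.add hvf) (integrable_const _)).trans ?_
        rw [integral_add' hvm hvf, integral_const, probReal_univ, one_smul]
        ring

end MeanOsc

section Integrability

variable {X : Type*} [PseudoMetricSpace X] {f v : X → ℝ} {W : Set X} {x : X} {r : ℝ}

lemma LocallyLipschitzOnSet.exists_lipschitzWith_eqOn (hv : LocallyLipschitzOnSet v W)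
    (hW : closedBall x r ⊆ W) : ∃ K w, LipschitzWith K w ∧ EqOn v w (closedBall x r) := by
  obtain ⟨K, hK⟩ := hv _ isClosed_closedBall isBounded_closedBall hW
  obtain ⟨w, hw, hvw⟩ := hK.extend_real
  exact ⟨K, w, hw, hvw⟩

variable [MeasurableSpace X] [OpensMeasurableSpace X] {μ : Measure X}

lemma LocallyLipschitzOnSet.integrableOn_ball (hv : LocallyLipschitzOnSet v W)
    (hW : closedBall x r ⊆ W) (hμ : μ (ball x r) ≠ ⊤) : IntegrableOn v (ball x r) μ := by
  obtain ⟨K, w, hw, hvw⟩ := hv.exists_lipschitzWith_eqOn hW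
  obtain ⟨M, hM⟩ := (hw.isBounded_image isBounded_ball).exists_norm_le
  refine (Measure.integrableOn_of_bounded hμ hw.continuous.aestronglyMeasurable
    (ae_restrict_of_forall_mem measurableSet_ball fun y hy =>
      hM _ (mem_image_of_mem w hy))).congr_fun ?_ measurableSet_ball
  exact fun y hy => (hvw (ball_subset_closedBall hy)).symm

lemma TendstoL1loc.integrableOn_ball {us : ℕ → X → ℝ} (hlim : TendstoL1loc μ us f W)
    (hlip : ∀ i, LocallyLipschitzOnSet (us i) W) (hf : AEStronglyMeasurable f μ)
    (hW : closedBall x r ⊆ W) (hμ : μ (ball x r) ≠ ⊤) : IntegrableOn f (ball x r) μ := by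
  obtain ⟨i, hi⟩ := ((hlim _ isClosed_closedBall isBounded_closedBall hW).eventually_lt_const
    ENNReal.zero_lt_top).exists
  have hui := (hlip i).integrableOn_ball hW hμ
  have hdiff : IntegrableOn (fun y => us i y - f y) (ball x r) μ := by
    refine ⟨hui.aestronglyMeasurable.sub hf.restrict, ?_⟩
    rw [hasFiniteIntegral_iff_norm]
    exact (lintegral_mono_set ball_subset_closedBall).trans_lt hi
  simpa [Pi.sub_def] using hui.sub hdiff

end Integrability

namespace SupportsPoincare

variable {X : Type*} [MetricSpace X] [MeasurableSpace X] [BorelSpace X] {μ : Measure X} {CP : ℝ}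
  {f v : X → ℝ} {W : Set X} {x : X} {r : ℝ}

lemma ofReal_meanOsc_le_of_lipschitzWith (hP : SupportsPoincare μ CP) {K : ℝ≥0}
    (hv : LipschitzWith K v) (x : X) (hr : 0 < r) :
    ENNReal.ofReal (meanOsc (μ.restrict (ball x r)) v) ≤
      ENNReal.ofReal (CP * r) * ⨍⁻ y in ball x r, lipConst v y ∂μ := by
  have hm := measurable_lipConst hv.continuous
  have hle : meanOsc (μ.restrict (ball x r)) v ≤
      CP * r * ⨍ y in ball x r, (lipConst v y).toReal ∂μ :=
    hP v (fun s _ _ _ => ⟨K, hv.lipschitzOnWith⟩) _ (fun _ => ENNReal.toReal_nonneg)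
      hm.ennreal_toReal (isUpperGradientOf_lipConst hv) x r hr
  rw [← toReal_setLAverage hm.aemeasurable
    (Eventually.of_forall (lipConst_ne_top_of_lipschitzWith hv))] at hle
  refine (ENNReal.ofReal_le_ofReal hle).trans ?_
  rw [ENNReal.ofReal_mul' ENNReal.toReal_nonneg]
  gcongr
  exact ENNReal.ofReal_toReal_le

lemma ofReal_meanOsc_le_of_locallyLipschitzOnSet (hP : SupportsPoincare μ CP)
    (hv : LocallyLipschitzOnSet v W) (hr : 0 < r) (hW : closedBall x r ⊆ W) :
    ENNReal.ofReal (meanOsc (μ.restrict (ball x r)) v) ≤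
      ENNReal.ofReal (CP * r) * ⨍⁻ y in ball x r, lipConst v y ∂μ := by
  obtain ⟨K, w, hw, hvw⟩ := hv.exists_lipschitzWith_eqOn hW
  replace hvw : EqOn v w (ball x r) := hvw.mono ball_subset_closedBall
  have hlip : EqOn (lipConst v) (lipConst w) (ball x r) := fun y hy => by
    obtain ⟨ε, hε, hεr⟩ := Metric.isOpen_iff.1 isOpen_ball y hy
    exact lipConst_congr hε (hvw.mono hεr)
  rw [meanOsc_congr (hvw.aeEq_restrict measurableSet_ball),
    setLAverage_congr_fun measurableSet_ball hlip]
  exact hP.ofReal_meanOsc_le_of_lipschitzWith hw x hr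

lemma ofReal_meanOsc_le_add (hP : SupportsPoincare μ CP) (hf : IntegrableOn f (ball x r) μ)
    (hv : LocallyLipschitzOnSet v W) (hr : 0 < r) (hW : closedBall x r ⊆ W)
    (hμ : μ (ball x r) ≠ ⊤) :
    ENNReal.ofReal (meanOsc (μ.restrict (ball x r)) f) ≤
      ENNReal.ofReal (CP * r) / μ (ball x r) * ∫⁻ y in W, lipConst v y ∂μ +
        2 * ((∫⁻ y in closedBall x r, ENNReal.ofReal |v y - f y| ∂μ) / μ (ball x r)) := by
  have := isFiniteMeasure_restrict.2 hμ
  have hvi := hv.integrableOn_ball hW hμ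
  have hv_le : ENNReal.ofReal (meanOsc (μ.restrict (ball x r)) v) ≤
      ENNReal.ofReal (CP * r) / μ (ball x r) * ∫⁻ y in W, lipConst v y ∂μ := by
    refine (hP.ofReal_meanOsc_le_of_locallyLipschitzOnSet hv hr hW).trans ?_
    rw [setLAverage_eq, ← mul_div_assoc, ENNReal.mul_div_right_comm]
    gcongr
    exact ball_subset_closedBall.trans hW
  have hdiff_le : ENNReal.ofReal (⨍ y in ball x r, |v y - f y| ∂μ) ≤
      (∫⁻ y in closedBall x r, ENNReal.ofReal |v y - f y| ∂μ) / μ (ball x r) := by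
    rw [ofReal_setAverage (f := fun y => |v y - f y|) (hvi.sub hf).abs
      (Eventually.of_forall fun _ => abs_nonneg _)]
    gcongr
    exact ball_subset_closedBall
  calc ENNReal.ofReal (meanOsc (μ.restrict (ball x r)) f)
      ≤ ENNReal.ofReal (meanOsc (μ.restrict (ball x r)) v +
          2 * ⨍ y in ball x r, |v y - f y| ∂μ) := ENNReal.ofReal_le_ofReal (meanOsc_le_add hf hvi)
    _ ≤ ENNReal.ofReal (meanOsc (μ.restrict (ball x r)) v) +
          2 * ENNReal.ofReal (⨍ y in ball x r, |v y - f y| ∂μ) := by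
        rw [← ENNReal.ofReal_ofNat 2, ← ENNReal.ofReal_mul zero_le_two]
        exact ENNReal.ofReal_add_le
    _ ≤ _ := by gcongr

-- `L¹_loc(W)` convergence only controls closed subsets of `W`, hence the enlarged ball.
theorem ofReal_meanOsc_le_totVarOn (hP : SupportsPoincare μ CP) (hCP : 0 < CP)
    (hf : AEStronglyMeasurable f μ) (hr : 0 < r) (hμ₀ : μ (ball x r) ≠ 0)
    (hμ : μ (ball x r) ≠ ⊤) :
    ENNReal.ofReal (meanOsc (μ.restrict (ball x r)) f) ≤
      ENNReal.ofReal (CP * r) / μ (ball x r) * totVarOn μ f (ball x (2 * r)) := by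
  have hc₀ : ENNReal.ofReal (CP * r) / μ (ball x r) ≠ 0 :=
    ENNReal.div_ne_zero.2 ⟨(ENNReal.ofReal_pos.2 (by positivity)).ne', hμ⟩
  have hc : ENNReal.ofReal (CP * r) / μ (ball x r) ≠ ⊤ :=
    ENNReal.div_ne_top ENNReal.ofReal_ne_top hμ₀
  have hW : closedBall x r ⊆ ball x (2 * r) := closedBall_subset_ball (by linarith)
  rw [← ENNReal.inv_mul_le_iff hc₀ hc]
  refine le_iInf fun us => le_iInf fun hlip => le_iInf fun hlim => ?_
  rw [ENNReal.inv_mul_le_iff hc₀ hc, ← ENNReal.liminf_const_mul_of_ne_top hc]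
  have hfi := hlim.integrableOn_ball hlip hf hW hμ
  have herror : Tendsto (fun i => 2 *
      ((∫⁻ y in closedBall x r, ENNReal.ofReal |us i y - f y| ∂μ) / μ (ball x r))) atTop (𝓝 0) := by
    simpa using ENNReal.Tendsto.const_mul (a := 2) (ENNReal.Tendsto.div_const
      (hlim _ isClosed_closedBall isBounded_closedBall hW) (Or.inr hμ₀))
      (Or.inr ENNReal.ofNat_ne_top)
  rw [← ENNReal.liminf_add_of_right_tendsto_zero herror]
  exact le_liminf_of_le (by isBoundedDefault) (Eventually.of_forall fun i =>
    hP.ofReal_meanOsc_le_add hfi (hlip i) hr hW hμ)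

end SupportsPoincare

end Poincare

section Telescoping

lemma abs_setAverage_sub_setAverage_le {α : Type*} [MeasurableSpace α] {μ : Measure α} {f : α → ℝ}
    {S B : Set α} {c : ℝ≥0} (hSB : S ⊆ B) (hS : μ S ≠ 0) (hB : μ B ≠ ⊤) (hBS : μ B ≤ c * μ S)
    (hf : IntegrableOn f B μ) :
    |(⨍ y in S, f y ∂μ) - ⨍ y in B, f y ∂μ| ≤ c * meanOsc (μ.restrict B) f := by
  have hS' : μ S ≠ ⊤ := measure_ne_top_of_subset hSB hB
  have hpos : 0 < μ.real S := ENNReal.toReal_pos hS hS'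
  have hBS' : μ.real B ≤ c * μ.real S := by
    simpa [measureReal_def] using ENNReal.toReal_mono (by finiteness) hBS
  set a := ⨍ y in B, f y ∂μ
  have hfa : IntegrableOn (fun y => |f y - a|) B μ := (hf.sub (integrableOn_const hB)).abs
  have hosc : 0 ≤ meanOsc (μ.restrict B) f :=
    integral_nonneg fun _ => abs_nonneg _
  have hint : μ.real S * ((⨍ y in S, f y ∂μ) - a) = ∫ y in S, (f y - a) ∂μ := by
    rw [integral_sub (hf.mono_set hSB) (integrableOn_const hS'), setIntegral_const, mul_sub,
      ← smul_eq_mul, measure_smul_setAverage f hS', smul_eq_mul]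
  refine le_of_mul_le_mul_left ?_ hpos
  calc μ.real S * |(⨍ y in S, f y ∂μ) - a| = |∫ y in S, (f y - a) ∂μ| := by
        rw [← hint, abs_mul, abs_of_pos hpos]
    _ ≤ ∫ y in S, |f y - a| ∂μ := abs_integral_le_integral_abs
    _ ≤ ∫ y in B, |f y - a| ∂μ :=
        setIntegral_mono_set hfa (Eventually.of_forall fun _ => abs_nonneg _) hSB.eventuallyLE
    _ = μ.real B * meanOsc (μ.restrict B) f := (measure_smul_setAverage _ hB).symm
    _ ≤ c * μ.real S * meanOsc (μ.restrict B) f := by gcongr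
    _ = μ.real S * (c * meanOsc (μ.restrict B) f) := by ring

namespace IsDoublingWith

variable {X : Type*} [PseudoMetricSpace X] [MeasurableSpace X] {μ : Measure X} {Cd : ℝ≥0}
  {f : X → ℝ} {y z : X} {M r : ℝ}

lemma abs_sub_setAverage_ball_le (h : IsDoublingWith μ Cd) (hr : 0 < r)
    (hf : IntegrableOn f (ball y r) μ)
    (hM : ∀ s ∈ Ioc 0 r, meanOsc (μ.restrict (ball y s)) f ≤ M * s)
    (hlim : Tendsto (fun s => ⨍ w in ball y s, f w ∂μ) (𝓝[>] 0) (𝓝 (f y))) :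
    |f y - ⨍ w in ball y r, f w ∂μ| ≤ 2 * Cd * M * r := by
  have hpos (n : ℕ) : 0 < r / 2 ^ n := by positivity
  have hzero : Tendsto (fun n : ℕ => r / 2 ^ n) atTop (𝓝 0) :=
    tendsto_const_nhds.div_atTop (tendsto_pow_atTop_atTop_of_one_lt one_lt_two)
  have hradii : Tendsto (fun n : ℕ => r / 2 ^ n) atTop (𝓝[>] 0) :=
    tendsto_nhdsWithin_iff.2 ⟨hzero, Eventually.of_forall hpos⟩
  have hstep (n : ℕ) : dist (⨍ w in ball y (r / 2 ^ n), f w ∂μ)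
      (⨍ w in ball y (r / 2 ^ (n + 1)), f w ∂μ) ≤ 2 * Cd * M * r / 2 / 2 ^ n := by
    have hle : r / 2 ^ n ≤ r := div_le_self hr.le (one_le_pow₀ one_le_two)
    have htwo : r / 2 ^ n = 2 * (r / 2 ^ (n + 1)) := by rw [pow_succ]; field_simp
    rw [dist_comm, Real.dist_eq]
    calc _ ≤ Cd * meanOsc (μ.restrict (ball y (r / 2 ^ n))) f :=
          abs_setAverage_sub_setAverage_le (ball_subset_ball (by linarith [hpos (n + 1)]))
            (h.measure_ball_pos y (hpos _)).ne' (h.measure_ball_lt_top y _).ne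
            (htwo ▸ h.measure_ball_two_mul_le y (hpos _)) (hf.mono_set (ball_subset_ball hle))
      _ ≤ Cd * (M * (r / 2 ^ n)) := by gcongr; exact hM _ ⟨hpos n, hle⟩
      _ = 2 * Cd * M * r / 2 / 2 ^ n := by ring
  have htel := dist_le_of_le_geometric_two_of_tendsto₀ hstep (hlim.comp hradii)
  rwa [pow_zero, div_one, dist_comm, Real.dist_eq] at htel

theorem abs_sub_le_mul_dist (h : IsDoublingWith μ Cd)
    (hf : IntegrableOn f (ball y (2 * dist y z)) μ)
    (hMy : ∀ s ∈ Ioc 0 (2 * dist y z), meanOsc (μ.restrict (ball y s)) f ≤ M * s)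
    (hMz : ∀ s ∈ Ioc 0 (dist y z), meanOsc (μ.restrict (ball z s)) f ≤ M * s)
    (hlimy : Tendsto (fun s => ⨍ w in ball y s, f w ∂μ) (𝓝[>] 0) (𝓝 (f y)))
    (hlimz : Tendsto (fun s => ⨍ w in ball z s, f w ∂μ) (𝓝[>] 0) (𝓝 (f z)))
    (hyz : 0 < dist y z) :
    |f y - f z| ≤ (6 * Cd + 2 * Cd ^ 2) * M * dist y z := by
  set d := dist y z
  have hzy : ball z d ⊆ ball y (2 * d) :=
    ball_subset_ball' (by linarith [dist_comm y z])
  have hy := h.abs_sub_setAverage_ball_le (by positivity) hf hMy hlimy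
  have hz := h.abs_sub_setAverage_ball_le hyz (hf.mono_set hzy) hMz hlimz
  have hcompare : |(⨍ w in ball z d, f w ∂μ) - ⨍ w in ball y (2 * d), f w ∂μ| ≤
      Cd ^ 2 * (M * (2 * d)) := calc
    _ ≤ (Cd ^ 2 : ℝ≥0) * meanOsc (μ.restrict (ball y (2 * d))) f :=
        abs_setAverage_sub_setAverage_le hzy (h.measure_ball_pos z hyz).ne'
          (h.measure_ball_lt_top y _).ne ((measure_mono (ball_subset_ball' (by linarith))).trans
            (h.measure_ball_four_mul_le z hyz)) hf
    _ ≤ (Cd ^ 2 : ℝ≥0) * (M * (2 * d)) := by gcongr; exact hMy _ ⟨by positivity, le_rfl⟩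
    _ = Cd ^ 2 * (M * (2 * d)) := by push_cast; rfl
  rw [abs_le] at *
  constructor <;> linarith

end IsDoublingWith

end Telescoping

section BallDensity

variable {X : Type*} [PseudoMetricSpace X] [MeasurableSpace X] {μ : Measure X} {Cd : ℝ≥0}

/-- The points at which the density of `F` with respect to `μ` is at most `q` at all scales below
`ρ`. The closed ball on the right makes this set closed for monotone `F`. -/
def ballDensityLE (μ : Measure X) (F : Set X → ℝ≥0∞) (q : ℝ≥0) (ρ : ℝ) : Set X :=
  {x | ∀ s, 0 < s → s < ρ → F (ball x s) ≤ q * μ (closedBall x s)}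

lemma exists_mem_ballDensityLE {F : Set X → ℝ≥0∞} {q : ℝ≥0} {x : X}
    (hx : ∀ᶠ r in 𝓝[>] 0, F (ball x r) ≤ q * μ (ball x r)) :
    ∃ k : ℕ, x ∈ ballDensityLE μ F q (1 / ((k : ℝ) + 1)) := by
  obtain ⟨ρ, hρ, hρx⟩ := mem_nhdsGT_iff_exists_Ioo_subset.1 hx
  obtain ⟨k, hk⟩ := exists_nat_one_div_lt (mem_Ioi.1 hρ)
  refine ⟨k, fun s hs hsk => (hρx ⟨hs, hsk.trans hk⟩).trans ?_⟩
  gcongr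
  exact ball_subset_closedBall

variable [OpensMeasurableSpace X]

lemma tendsto_measure_closedBall_nhdsGT (x : X) {s r : ℝ} (hsr : s < r)
    (hr : μ (closedBall x r) ≠ ⊤) :
    Tendsto (fun t => μ (closedBall x t)) (𝓝[>] s) (𝓝 (μ (closedBall x s))) := by
  rw [← biInter_gt_closedBall x s]
  exact tendsto_measure_biInter_gt (fun _ _ => isClosed_closedBall.measurableSet.nullMeasurableSet)
    (fun _ _ _ hij => closedBall_subset_closedBall hij) ⟨r, hsr, hr⟩

lemma isClosed_ballDensityLE {F : Set X → ℝ≥0∞} (h : IsDoublingWith μ Cd) (hF : Monotone F)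
    (q : ℝ≥0) (ρ : ℝ) : IsClosed (ballDensityLE μ F q ρ) := by
  rw [← isOpen_compl_iff, Metric.isOpen_iff]
  intro x hx
  simp only [ballDensityLE, mem_compl_iff, mem_ofPred_eq, not_forall, not_le] at hx
  obtain ⟨s, hs, hsρ, hlt⟩ := hx
  have hlim := ENNReal.Tendsto.const_mul (a := (q : ℝ≥0∞)) (tendsto_measure_closedBall_nhdsGT x
    (lt_add_one s) (h.measure_closedBall_lt_top x _).ne) (Or.inr ENNReal.coe_ne_top)
  obtain ⟨r, hr, hsr, hrρ⟩ := ((hlim.eventually_lt_const hlt).and (Ioo_mem_nhdsGT hsρ)).exists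
  refine ⟨(r - s) / 2, by linarith, fun y hy hyE => hr.not_ge ?_⟩
  rw [mem_ball] at hy
  calc F (ball x s) ≤ F (ball y ((r + s) / 2)) :=
        hF (ball_subset_ball' (by rw [dist_comm]; linarith))
    _ ≤ q * μ (closedBall y ((r + s) / 2)) := hyE _ (by linarith) (by linarith)
    _ ≤ q * μ (closedBall x r) := by gcongr; exact closedBall_subset_closedBall' (by linarith)

end BallDensity

section Density

variable {X : Type*} [PseudoMetricSpace X] [MeasurableSpace X] {μ : Measure X} {Cd : ℝ≥0}
  {A B : Set X} {x : X}

lemma DensityZeroAt.congr (hA : DensityZeroAt μ A x) (h : A =ᵐ[μ] B) : DensityZeroAt μ B x := by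
  have heq (r : ℝ) : μ (A ∩ ball x r) = μ (B ∩ ball x r) :=
    measure_congr (h.inter (ae_eq_refl _))
  simpa only [DensityZeroAt, heq] using hA

variable [BorelSpace X]

namespace IsDoublingWith

lemma ae_densityZeroAt_compl (h : IsDoublingWith μ Cd) (hg : IsGeodesic X) {E : Set X}
    (hE : MeasurableSet E) : ∀ᵐ x ∂μ, x ∈ E → DensityZeroAt μ Eᶜ x := by
  filter_upwards [h.ae_tendsto_measure_inter_closedBall_div hE.compl] with x hx hxE
  rw [indicator_of_notMem (notMem_compl_iff.2 hxE)] at hx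
  refine hx.congr' ?_
  filter_upwards [self_mem_nhdsWithin] with r (hr : 0 < r)
  have hball := h.ball_ae_eq_closedBall hg x hr
  have hinter : μ (Eᶜ ∩ ball x r) = μ (Eᶜ ∩ closedBall x r) :=
    measure_congr ((ae_eq_refl Eᶜ).inter hball)
  rw [measure_congr hball, hinter]

lemma ae_tendsto_setAverage_ball (h : IsDoublingWith μ Cd) (hg : IsGeodesic X) {f : X → ℝ}
    (hf : LocallyIntegrable f μ) :
    ∀ᵐ x ∂μ, Tendsto (fun r => ⨍ y in ball x r, f y ∂μ) (𝓝[>] 0) (𝓝 (f x)) := by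
  have := h.isUnifLocDoublingMeasure
  have := h.isLocallyFiniteMeasure
  have := h.secondCountableTopology
  filter_upwards [IsUnifLocDoublingMeasure.ae_tendsto_average μ hf 1] with x hx
  refine (hx (fun _ => x) id tendsto_id ?_).congr' ?_ <;>
    filter_upwards [self_mem_nhdsWithin] with r (hr : 0 < r)
  · simpa using hr.le
  · exact setAverage_congr (h.ball_ae_eq_closedBall hg x hr).symm

end IsDoublingWith

end Density

section ApproxLipschitz

/-- `f` is approximately `K`-Lipschitz at `x`: outside a set of density `0` at `x` that does not
contain `x`, it is `K`-Lipschitz near `x`. -/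
def ApproxLipschitzAt {X : Type*} [PseudoMetricSpace X] [MeasurableSpace X] (μ : Measure X)
    (f : X → ℝ) (K : ℝ) (x : X) : Prop :=
  ∃ R : ℝ, 0 < R ∧ ∃ A : Set X, x ∉ A ∧ DensityZeroAt μ A x ∧
    ∀ y ∈ ball x R \ A, ∀ z ∈ ball x R \ A, |f y - f z| ≤ K * dist y z

lemma ApproxLipschitzAt.mono {X : Type*} [PseudoMetricSpace X] [MeasurableSpace X] {μ : Measure X}
    {f : X → ℝ} {K L : ℝ} {x : X} (h : ApproxLipschitzAt μ f K x) (hKL : K ≤ L) :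
    ApproxLipschitzAt μ f L x := by
  obtain ⟨R, hR, A, hxA, hA, hlip⟩ := h
  exact ⟨R, hR, A, hxA, hA, fun y hy z hz => (hlip y hy z hz).trans (by gcongr)⟩

/-- A factor `K` such that a BV function of total variation density at most `q` on small balls is
approximately `K * q`-Lipschitz. -/
def bvLipschitzFactor (Cd : ℝ≥0) (CP : ℝ) : ℝ :=
  (6 * Cd + 2 * Cd ^ 2) * (CP * Cd)

lemma bvLipschitzFactor_nonneg (Cd : ℝ≥0) {CP : ℝ} (hCP : 0 ≤ CP) :
    0 ≤ bvLipschitzFactor Cd CP := by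
  unfold bvLipschitzFactor
  positivity

variable {X : Type*} [MetricSpace X] [MeasurableSpace X] [BorelSpace X] {μ : Measure X} {Cd : ℝ≥0}
  {CP : ℝ} {f : X → ℝ}

lemma IsBV.aestronglyMeasurable (hf : IsBV μ f) (h : IsDoublingWith μ Cd) :
    AEStronglyMeasurable f μ :=
  have := h.secondCountableTopology
  hf.1.aestronglyMeasurable

lemma IsBV.integrableOn_ball (hf : IsBV μ f) (h : IsDoublingWith μ Cd) (x : X) (r : ℝ) :
    IntegrableOn f (ball x r) μ := by
  obtain ⟨us, hus⟩ := iInf_lt_iff.1 hf.2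
  obtain ⟨hlip, hus⟩ := iInf_lt_iff.1 hus
  obtain ⟨hlim, -⟩ := iInf_lt_iff.1 hus
  exact hlim.integrableOn_ball hlip (hf.aestronglyMeasurable h) (subset_univ _)
    (h.measure_ball_lt_top x r).ne

namespace SupportsPoincare

variable {q : ℝ≥0} {ρ r : ℝ} {y z : X}

lemma meanOsc_le_of_mem_ballDensityLE (hP : SupportsPoincare μ CP) (hCP : 0 < CP)
    (h : IsDoublingWith μ Cd) (hg : IsGeodesic X) (hf : AEStronglyMeasurable f μ)
    (hy : y ∈ ballDensityLE μ (totVarOn μ f) q ρ) (hr : 0 < r) (hrρ : 2 * r < ρ) :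
    meanOsc (μ.restrict (ball y r)) f ≤ CP * Cd * q * r := by
  have hμ₀ := (h.measure_ball_pos y hr).ne'
  have hμ := (h.measure_ball_lt_top y r).ne
  rw [← ENNReal.ofReal_le_ofReal_iff (by positivity)]
  calc ENNReal.ofReal (meanOsc (μ.restrict (ball y r)) f)
      ≤ ENNReal.ofReal (CP * r) / μ (ball y r) * totVarOn μ f (ball y (2 * r)) :=
        hP.ofReal_meanOsc_le_totVarOn hCP hf hr hμ₀ hμ
    _ ≤ ENNReal.ofReal (CP * r) / μ (ball y r) * (q * (Cd * μ (ball y r))) := by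
        gcongr
        refine (hy (2 * r) (by positivity) hrρ).trans ?_
        rw [← measure_congr (h.ball_ae_eq_closedBall hg y (by positivity))]
        gcongr
        exact h.measure_ball_two_mul_le y hr
    _ = ENNReal.ofReal (CP * r) * (q * Cd) := by
        rw [← mul_assoc (q : ℝ≥0∞), mul_comm _ (μ _), ← mul_assoc, ENNReal.div_mul_cancel hμ₀ hμ]
    _ = ENNReal.ofReal (CP * Cd * q * r) := by
        rw [← ENNReal.coe_mul, ← ENNReal.ofReal_coe_nnreal, ← ENNReal.ofReal_mul (by positivity)]
        push_cast
        ring_nf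

lemma abs_sub_le_of_mem_ballDensityLE (hP : SupportsPoincare μ CP) (hCP : 0 < CP)
    (h : IsDoublingWith μ Cd) (hg : IsGeodesic X) (hf : IsBV μ f)
    (hy : y ∈ ballDensityLE μ (totVarOn μ f) q ρ) (hz : z ∈ ballDensityLE μ (totVarOn μ f) q ρ)
    (hlimy : Tendsto (fun r => ⨍ w in ball y r, f w ∂μ) (𝓝[>] 0) (𝓝 (f y)))
    (hlimz : Tendsto (fun r => ⨍ w in ball z r, f w ∂μ) (𝓝[>] 0) (𝓝 (f z)))
    (hyz : 4 * dist y z < ρ) : |f y - f z| ≤ bvLipschitzFactor Cd CP * q * dist y z := by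
  rcases eq_or_ne y z with rfl | hne
  · simp
  have hd : 0 < dist y z := dist_pos.2 hne
  have hm := hf.aestronglyMeasurable h
  refine (h.abs_sub_le_mul_dist (hf.integrableOn_ball h y _)
    (fun s hs => hP.meanOsc_le_of_mem_ballDensityLE hCP h hg hm hy hs.1 (by linarith [hs.2]))
    (fun s hs => hP.meanOsc_le_of_mem_ballDensityLE hCP h hg hm hz hs.1 (by linarith [hs.2]))
    hlimy hlimz hd).trans_eq ?_
  rw [bvLipschitzFactor]
  ring

lemma ae_approxLipschitzAt_of_mem_ballDensityLE (hP : SupportsPoincare μ CP) (hCP : 0 < CP)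
    (h : IsDoublingWith μ Cd) (hg : IsGeodesic X) (hf : IsBV μ f) (q : ℝ≥0) (hρ : 0 < ρ) :
    ∀ᵐ x ∂μ, x ∈ ballDensityLE μ (totVarOn μ f) q ρ →
      ApproxLipschitzAt μ f (bvLipschitzFactor Cd CP * q) x := by
  set E := ballDensityLE μ (totVarOn μ f) q ρ
  set N := {x | ¬Tendsto (fun r => ⨍ y in ball x r, f y ∂μ) (𝓝[>] 0) (𝓝 (f x))}
  have hlim := h.ae_tendsto_setAverage_ball hg hf.1
  have hN : Eᶜ =ᵐ[μ] (Eᶜ ∪ N : Set X) :=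
    (union_ae_eq_left_of_ae_eq_empty (ae_eq_empty.2 hlim)).symm
  have hE : MeasurableSet E :=
    (isClosed_ballDensityLE h (fun _ _ => totVarOn_mono) q ρ).measurableSet
  filter_upwards [h.ae_densityZeroAt_compl hg hE, hlim] with x hx hxN hxE
  refine ⟨ρ / 8, by positivity, Eᶜ ∪ N, ?_, (hx hxE).congr hN, fun y ⟨hyx, hyA⟩ z ⟨hzx, hzA⟩ => ?_⟩
  · rintro (hxE' | hxN')
    exacts [hxE' hxE, hxN' hxN]
  · simp only [mem_union, not_or, N, mem_compl_iff, mem_ofPred_eq, not_not] at hyA hzA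
    rw [mem_ball] at hyx hzx
    exact hP.abs_sub_le_of_mem_ballDensityLE hCP h hg hf hyA.1 hzA.1 hyA.2 hzA.2
      (by linarith [dist_triangle_right y z x])

lemma ae_approxLipschitzAt_of_eventually_le (hP : SupportsPoincare μ CP) (hCP : 0 < CP)
    (h : IsDoublingWith μ Cd) (hg : IsGeodesic X) (hf : IsBV μ f) (q : ℝ≥0) :
    ∀ᵐ x ∂μ, (∀ᶠ r in 𝓝[>] 0, totVarOn μ f (ball x r) ≤ q * μ (ball x r)) →
      ApproxLipschitzAt μ f (bvLipschitzFactor Cd CP * q) x := by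
  filter_upwards [ae_all_iff.2 fun k : ℕ => hP.ae_approxLipschitzAt_of_mem_ballDensityLE hCP h hg hf
    q (ρ := 1 / ((k : ℝ) + 1)) (by positivity)] with x hx hxq
  obtain ⟨k, hk⟩ := exists_mem_ballDensityLE hxq
  exact hx k hk

theorem ae_exists_density_approxLipschitzAt (hP : SupportsPoincare μ CP) (hCP : 0 < CP)
    (h : IsDoublingWith μ Cd) (hg : IsGeodesic X) (hf : IsBV μ f) :
    ∀ᵐ x ∂μ, ∃ D : ℝ≥0,
      Tendsto (fun r : ℝ => totVarOn μ f (ball x r) / μ (ball x r)) (𝓝[>] 0) (𝓝 D) ∧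
      ∀ q, D < q → ApproxLipschitzAt μ f (bvLipschitzFactor Cd CP * q) x := by
  obtain ⟨d, hdc, hdd⟩ := TopologicalSpace.exists_countable_dense ℝ≥0
  filter_upwards [(ballSuperadditive_totVarOn f).ae_exists_tendsto_div h hg hf.2.ne,
    (ae_ball_iff hdc).2 fun q _ => hP.ae_approxLipschitzAt_of_eventually_le hCP h hg hf q]
    with x ⟨D, hD⟩ hx
  refine ⟨D, hD, fun q hDq => ?_⟩
  obtain ⟨p, hp, hDp, hpq⟩ := hdd.exists_between hDq
  have hle : ∀ᶠ r in 𝓝[>] 0, totVarOn μ f (ball x r) ≤ p * μ (ball x r) := by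
    filter_upwards [hD.eventually_lt_const (ENNReal.coe_lt_coe.2 hDp), self_mem_nhdsWithin]
      with r hr (hr₀ : 0 < r)
    exact (ENNReal.div_le_iff (h.measure_ball_pos x hr₀).ne' (h.measure_ball_lt_top x r).ne).1 hr.le
  refine (hx p hp hle).mono ?_
  gcongr
  exact bvLipschitzFactor_nonneg Cd hCP.le

end SupportsPoincare

end ApproxLipschitz

theorem statement5_general (Cd : ℝ≥0) (CP : ℝ) (hCP : 0 < CP) :
    ∃ C : ℝ, 1 ≤ C ∧
      ∀ (X : Type u) [MetricSpace X] [MeasurableSpace X] [BorelSpace X] (μ : Measure X),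
        IsGeodesic X → IsDoublingWith μ Cd → SupportsPoincare μ CP → ∀ u : X → ℝ, IsBV μ u →
          ∀ᵐ x ∂μ, ∃ D : ℝ≥0,
            Tendsto (fun r : ℝ => totVarOn μ u (ball x r) / μ (ball x r)) (𝓝[>] 0) (𝓝 D) ∧
            (0 < D → ApproxLipschitzAt μ u (C * D) x) ∧
            (D = 0 → ∀ δ : ℝ, 0 < δ → ApproxLipschitzAt μ u δ x) := by
  have hK := bvLipschitzFactor_nonneg Cd hCP.le
  set K := bvLipschitzFactor Cd CP
  obtain ⟨C, hC, hKC⟩ : ∃ C : ℝ, 1 ≤ C ∧ 2 * K ≤ C := ⟨_, le_max_left _ _, le_max_right _ _⟩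
  refine ⟨C, hC, fun X _ _ _ μ hg h hP u hu => ?_⟩
  filter_upwards [hP.ae_exists_density_approxLipschitzAt hCP h hg hu] with x ⟨D, hD, hx⟩
  refine ⟨D, hD, fun hpos => (hx (2 * D) ?_).mono ?_, fun hzero δ hδ => ?_⟩
  · exact lt_mul_of_one_lt_left hpos one_lt_two
  · calc K * (2 * D : ℝ≥0) = 2 * K * D := by push_cast; ring
      _ ≤ C * D := by gcongr
  · have hC₀ : 0 < C := one_pos.trans_le hC
    lift δ to ℝ≥0 using hδ.le
    lift C to ℝ≥0 using hC₀.le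
    refine (hx (δ / C) (hzero ▸ div_pos (by exact_mod_cast hδ) (by exact_mod_cast hC₀))).mono ?_
    calc K * (δ / C : ℝ≥0) ≤ C * (δ / C : ℝ≥0) := by gcongr; linarith
      _ = δ := by push_cast; field_simp

theorem statement5 (Cd : ℝ≥0) (CP : ℝ) (hCd : 1 ≤ Cd) (hCP : 0 < CP) :
    ∃ C : ℝ, 1 ≤ C ∧
      ∀ (X : Type u) [MetricSpace X] [MeasurableSpace X] [BorelSpace X]
        (μ : Measure X), GoodSpace X μ Cd CP →
        ∀ u : X → ℝ, IsBV μ u → PreciseRep μ u →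
          ∀ᵐ x ∂μ, ∃ D : ℝ≥0,
            Tendsto (fun r : ℝ => totVarOn μ u (ball x r) / μ (ball x r))
              (𝓝[>] (0:ℝ)) (𝓝 (D : ℝ≥0∞)) ∧
            (0 < D → ∃ R : ℝ, 0 < R ∧ ∃ A : Set X, x ∉ A ∧ DensityZeroAt μ A x ∧
              ∀ y ∈ ball x R \ A, ∀ z ∈ ball x R \ A,
                |u y - u z| ≤ C * (D : ℝ) * dist y z) ∧
            (D = 0 → ∀ δ : ℝ, 0 < δ →
              ∃ R : ℝ, 0 < R ∧ ∃ A : Set X, x ∉ A ∧ DensityZeroAt μ A x ∧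
                ∀ y ∈ ball x R \ A, ∀ z ∈ ball x R \ A,
                  |u y - u z| ≤ δ * dist y z) := by
  obtain ⟨C, hC, h⟩ := statement5_general.{u} Cd CP hCP
  exact ⟨C, hC, fun X _ _ _ μ ⟨_, _, hg, hμ, hP⟩ u hu _ => h X μ hg hμ hP u hu⟩

end
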